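/- arXiv:1605.02691 — 2 statements merged into one kernel-verified Lean document; each statement's English description precedes it below -/
import Mathlib

section
/- An unshielded plane continuum X is locally connected (as a topological subspace of ℂ) if and only if X is finitely Suslinian. -/
/-!
Why the equivalence holds.

*Finitely Suslinian implies locally connected.*  Fix `x ∈ X` and `r > 0` with `X` not inside
`ball x r`.  By boundary bumping, every component of `X ∩ closedBall x r` meeting
`ball x (r / 2)` reaches the sphere of radius `r`, so it has diameter at least `r / 2`.  These
components are pairwise disjoint, hence finite in number, hence the component of `x` is a
neighbourhood of `x` in `X`.

*Locally connected implies finitely Suslinian.*  Given infinitely many disjoint subcontinua of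
diameter at least `ε`, points `aₙ, bₙ ∈ Cₙ` at distance at least `ε / 2` converge, along a
subsequence, to distinct `a, b ∈ X`.  Local connectedness yields disjoint subcontinua `E₁`, `E₂`
of `X` which are neighbourhoods of `a` and `b`, and three of the `Cₙ` meet both of them.  As `X`
is unshielded, the path connected open set `UInf X` accumulates at every point of each `Cₙ`.
So `E₁`, `E₂` and `UInf X` play the role of three vertices, each joined to the three continua
`Cₙ`, and this produces a planar drawing of `K₃,₃` (`no_three_bridges`), where edges are continua
and edges without a common endpoint are disjoint.  The continuum `Cₙ` may be indecomposable, so it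
need not split at a point into a part going to `E₁` and a part going to `E₂`; `exists_center`
finds a point of `Cₙ` which can be approached arbitrarily closely from both sides, and a small disc
around that point serves as the vertex.

*Nonplanarity of `K₃,₃`* (`no_K33_paths`, `no_K33_continua`) is proved by the van Kampen
obstruction, computed with logarithms.  If two edges `g, h : ℝ → ℂ` are disjoint then
`g s - h t` has a continuous logarithm on the simply connected space `ℝ × ℝ`; its total variation
around the unit square is zero, which is an integer identity (`square_identity`) involving the
increments of the arguments along edges seen from vertices, and the odd integers `S p q` defined by
`log (p - q) - log (q - p) = S p q * π * I`.  In a suitable signed sum of these identities over all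
pairs of independent edges everything is divisible by `4` except a term `6 * odd`.
-/

open Filter Topology Set Complex

noncomputable section

/-- The union of all unbounded connected components of `ℂ \ X`.  For a compact set `X`
this is the unique unbounded complementary component `U_X^∞` of `X`. -/
def UInf (X : Set ℂ) : Set ℂ :=
  {z : ℂ | z ∉ X ∧ ¬ Bornology.IsBounded (connectedComponentIn Xᶜ z)}

/-- A compact plane set is unshielded if it coincides with the frontier of its unbounded
complementary component. -/
def Unshielded (X : Set ℂ) : Prop := X = frontier (UInf X)

/-- A set `X ⊆ ℂ` is finitely Suslinian if for every `ε > 0`, every collection of pairwise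
disjoint subcontinua of `X` of diameter at least `ε` is finite. -/
def FinSuslinianSet (X : Set ℂ) : Prop :=
  ∀ ε : ℝ, 0 < ε → ∀ 𝒞 : Set (Set ℂ),
    (∀ C ∈ 𝒞, C ⊆ X ∧ IsCompact C ∧ IsConnected C ∧ ε ≤ Metric.diam C) →
    𝒞.Pairwise Disjoint → 𝒞.Finite

end

/-! ### Continuous logarithms and integer increments -/

lemma exists_cont_log {A : Type*} [TopologicalSpace A] [SimplyConnectedSpace A]
    [LocallyPathConnectedSpace A] (f : C(A, ℂ)) (a₀ : A) (e₀ : ℂ) (he : exp e₀ = f a₀)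
    (hf : ∀ a, f a ≠ 0) : ∃! F : C(A, ℂ), F a₀ = e₀ ∧ exp ∘ F = f :=
  isCoveringMapOn_exp.existsUnique_continuousMap_lifts f he (fun a => by simpa using hf a)

/-- The argument of `g t - v`, followed continuously for `t` from `0` to `1`, changes by the
difference of the principal arguments at the two ends plus `n` full turns.  This is phrased as a
condition on every continuous logarithm `L` of `g - v`; the statement has content only when `g`
avoids `v`, since otherwise there is no such `L`. -/
def IsIncr (g : ℝ → ℂ) (v : ℂ) (n : ℤ) : Prop :=
  ∀ L : ℝ → ℂ, Continuous L → (∀ t, exp (L t) = g t - v) →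
    L 1 - L 0 = log (g 1 - v) - log (g 0 - v) + n * (2 * Real.pi * I)

lemma exists_isIncr {g : ℝ → ℂ} (hg : Continuous g) {v : ℂ} (hv : ∀ t, g t ≠ v) :
    ∃ n : ℤ, IsIncr g v n := by
  have hne : ∀ t, g t - v ≠ 0 := fun t => sub_ne_zero.2 (hv t)
  obtain ⟨F, ⟨hF0, hF⟩, -⟩ := exists_cont_log ⟨fun t => g t - v, by fun_prop⟩ (0 : ℝ)
    (log (g 0 - v)) (by simpa using exp_log (hne 0)) hne
  have hF' : ∀ t, exp (F t) = g t - v := fun t => congrFun hF t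
  have h1 : exp (F 1) = exp (log (g 1 - v)) := by rw [hF', exp_log (hne 1)]
  obtain ⟨n, hn⟩ := exp_eq_exp_iff_exists_int.1 h1
  refine ⟨n, fun L hL hexp => ?_⟩
  obtain ⟨m, hm⟩ := exp_eq_exp_iff_exists_int.1 ((hexp 0).trans (hF' 0).symm)
  obtain ⟨G, -, hG⟩ := exists_cont_log ⟨fun t => g t - v, by fun_prop⟩ (0 : ℝ)
    (L 0) (by simpa using hexp 0) hne
  have e1 := hG ⟨L, hL⟩ ⟨rfl, funext hexp⟩
  have e2 := hG ⟨fun t => F t + m * (2 * Real.pi * I), by fun_prop⟩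
    ⟨by simp [hm], by
      funext t
      simpa using (exp_eq_exp_iff_exists_int.2 ⟨m, rfl⟩ :
        exp (F t + m * (2 * Real.pi * I)) = exp (F t)).trans (hF' t)⟩
  have e3 : L 1 = F 1 + m * (2 * Real.pi * I) := DFunLike.congr_fun (e1.trans e2.symm) 1
  rw [e3, hm, hn, hF0]; ring

/-- The principal logarithms of `p - q` and `q - p` differ by an odd multiple of `π * I`. -/
lemma exists_log_swap : ∃ S : ℂ → ℂ → ℤ, ∀ p q, p ≠ q →
    Odd (S p q) ∧ S q p = - S p q ∧ log (p - q) - log (q - p) = S p q * (Real.pi * I) := by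
  have key : ∀ p q : ℂ, ∃ s : ℤ, p ≠ q → Odd s ∧
      log (p - q) - log (q - p) = s * (Real.pi * I) := by
    intro p q
    by_cases h : p = q
    · exact ⟨0, fun h' => (h' h).elim⟩
    have : exp (log (p - q)) = exp (log (q - p) + Real.pi * I) := by
      rw [exp_add, exp_log (sub_ne_zero.2 h), exp_log (sub_ne_zero.2 (Ne.symm h)), exp_pi_mul_I]
      ring
    obtain ⟨n, hn⟩ := exp_eq_exp_iff_exists_int.1 this
    refine ⟨2 * n + 1, fun _ => ⟨⟨n, rfl⟩, ?_⟩⟩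
    rw [hn]; push_cast; ring
  choose S hS using key
  refine ⟨S, fun p q h => ⟨(hS p q h).1, ?_, (hS p q h).2⟩⟩
  have h1 := (hS p q h).2
  have h2 := (hS q p h.symm).2
  have h3 : ((S q p + S p q : ℤ) : ℂ) * (Real.pi * I) = 0 := by
    push_cast; linear_combination -h1 - h2
  have : (S q p + S p q : ℤ) = 0 := by
    rcases mul_eq_zero.1 h3 with h | h
    · exact_mod_cast h
    · simp [Real.pi_ne_zero] at h
  omega

/-- For disjoint curves `g` and `h`, a continuous logarithm of `g s - h t` has zero total variation
around the boundary of the unit square.  Rewriting the four sides with principal logarithms, and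
turning `g s - h t` into `h t - g s` on the two vertical ones, gives this integer identity. -/
lemma square_identity {S : ℂ → ℂ → ℤ}
    (hS : ∀ p q, p ≠ q →
      Odd (S p q) ∧ S q p = - S p q ∧ log (p - q) - log (q - p) = S p q * (Real.pi * I))
    {g h : ℝ → ℂ} (hg : Continuous g) (hh : Continuous h) (hgh : ∀ s t, g s ≠ h t)
    {n₀ n₁ m₀ m₁ : ℤ} (hn₀ : IsIncr g (h 0) n₀) (hn₁ : IsIncr g (h 1) n₁)
    (hm₀ : IsIncr h (g 0) m₀) (hm₁ : IsIncr h (g 1) m₁) :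
    S (g 1) (h 0) - S (g 0) (h 0) - S (g 1) (h 1) + S (g 0) (h 1)
      + 2 * (n₀ + m₁ - n₁ - m₀) = 0 := by
  have hne : ∀ x : ℝ × ℝ, g x.1 - h x.2 ≠ 0 := fun x => sub_ne_zero.2 (hgh _ _)
  obtain ⟨L, ⟨-, hL⟩, -⟩ := exists_cont_log ⟨fun x : ℝ × ℝ => g x.1 - h x.2, by fun_prop⟩ (0, 0)
    (log (g 0 - h 0)) (by simpa using exp_log (hne (0, 0))) hne
  have hL' : ∀ s t, exp (L (s, t)) = g s - h t := fun s t => congrFun hL (s, t)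
  have a0 := hn₀ (fun s => L (s, 0)) (by fun_prop) (fun s => hL' s 0)
  have a1 := hn₁ (fun s => L (s, 1)) (by fun_prop) (fun s => hL' s 1)
  have hsw : ∀ s t, exp (L (s, t) + Real.pi * I) = h t - g s := fun s t => by
    rw [exp_add, hL', exp_pi_mul_I]; ring
  have b0 := hm₀ (fun t => L (0, t) + Real.pi * I) (by fun_prop) (fun t => hsw 0 t)
  have b1 := hm₁ (fun t => L (1, t) + Real.pi * I) (by fun_prop) (fun t => hsw 1 t)
  have c1 := (hS _ _ (hgh 1 0)).2.2
  have c2 := (hS _ _ (hgh 0 0)).2.2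
  have c3 := (hS _ _ (hgh 1 1)).2.2
  have c4 := (hS _ _ (hgh 0 1)).2.2
  have h3 : ((S (g 1) (h 0) - S (g 0) (h 0) - S (g 1) (h 1) + S (g 0) (h 1)
      + 2 * (n₀ + m₁ - n₁ - m₀) : ℤ) : ℂ) * (Real.pi * I) = 0 := by
    push_cast
    linear_combination -c1 + c2 + c3 - c4 - a0 + a1 + b0 - b1
  rcases mul_eq_zero.1 h3 with h | h
  · exact_mod_cast h
  · simp [Real.pi_ne_zero] at h

/-! ### Nonplanarity of `K₃,₃` -/

/-- There are no curves `g k i` from `v k` to `c i`, for `k, i : Fin 3`, such that edges without a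
common endpoint are disjoint.  Edges sharing an endpoint may intersect arbitrarily, and no edge has
to be injective. -/
lemma no_K33_paths (v c : Fin 3 → ℂ) (g : Fin 3 → Fin 3 → ℝ → ℂ)
    (hg : ∀ k i, Continuous (g k i)) (h0 : ∀ k i, g k i 0 = v k) (h1 : ∀ k i, g k i 1 = c i)
    (hd : ∀ k l i j, k ≠ l → i ≠ j → ∀ s t, g k i s ≠ g l j t) : False := by
  obtain ⟨S, hS⟩ := exists_log_swap
  have hN : ∀ k i l, ∃ n : ℤ, k ≠ l → IsIncr (g k i) (v l) n := by
    intro k i l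
    by_cases hkl : k = l
    · exact ⟨0, fun h => (h hkl).elim⟩
    obtain ⟨j, hj⟩ : ∃ j : Fin 3, i ≠ j := (exists_ne i).imp fun _ h => h.symm
    obtain ⟨n, hn⟩ := exists_isIncr (hg k i) (v := v l)
      (fun t => by rw [← h0 l j]; exact hd k l i j hkl hj t 0)
    exact ⟨n, fun _ => hn⟩
  have hM : ∀ k i j, ∃ n : ℤ, i ≠ j → IsIncr (g k i) (c j) n := by
    intro k i j
    by_cases hij : i = j
    · exact ⟨0, fun h => (h hij).elim⟩
    obtain ⟨l, hl⟩ : ∃ l : Fin 3, k ≠ l := (exists_ne k).imp fun _ h => h.symm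
    obtain ⟨n, hn⟩ := exists_isIncr (hg k i) (v := c j)
      (fun t => by rw [← h1 l j]; exact hd k l i j hl hij t 1)
    exact ⟨n, fun _ => hn⟩
  choose N hN using hN
  choose M hM using hM
  have hvv : ∀ k l, k ≠ l → v k ≠ v l := fun k l h => by
    rw [← h0 k 0, ← h0 l 1]; exact hd k l 0 1 h (by decide) 0 0
  have hcc : ∀ i j, i ≠ j → c i ≠ c j := fun i j h => by
    rw [← h1 0 i, ← h1 1 j]; exact hd 0 1 i j (by decide) h 1 1
  have hcv : ∀ i k, c i ≠ v k := fun i k => by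
    obtain ⟨l, hl⟩ := exists_ne k
    obtain ⟨j, hj⟩ := exists_ne i
    rw [← h1 l i, ← h0 k j]; exact hd l k i j hl hj.symm 1 0
  have E : ∀ k l i j, k ≠ l → i ≠ j →
      S (c i) (v l) - S (c j) (v k) - S (v k) (v l) - S (c i) (c j)
        + 2 * (N k i l + M l j i - M k i j - N l j k) = 0 := by
    intro k l i j hkl hij
    have := square_identity hS (hg k i) (hg l j) (hd k l i j hkl hij)
      (n₀ := N k i l) (n₁ := M k i j) (m₀ := N l j k) (m₁ := M l j i)
      (by rw [h0]; exact hN _ _ _ hkl) (by rw [h1]; exact hM _ _ _ hij)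
      (by rw [h0]; exact hN _ _ _ hkl.symm) (by rw [h1]; exact hM _ _ _ hij.symm)
    rw [h0, h0, h1, h1, (hS (c j) (v k) (hcv j k)).2.1] at this
    linarith
  -- Summing over the ordered pairs `i ≠ j`, the terms `S (c i) (c j)` cancel by antisymmetry.
  -- In the sum of `F 0 1`, `F 1 2` and `-F 0 2`, only `-6` times a sum of three odd numbers and
  -- multiples of `4` survive.
  have z01 := (hS _ _ (hcc 0 1 (by decide))).2.1
  have z02 := (hS _ _ (hcc 0 2 (by decide))).2.1
  have z12 := (hS _ _ (hcc 1 2 (by decide))).2.1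
  obtain ⟨y01, hy01⟩ := (hS _ _ (hvv 0 1 (by decide))).1
  obtain ⟨y02, hy02⟩ := (hS _ _ (hvv 0 2 (by decide))).1
  obtain ⟨y12, hy12⟩ := (hS _ _ (hvv 1 2 (by decide))).1
  have F : ∀ k l, k ≠ l →
    2 * (S (c 0) (v l) + S (c 1) (v l) + S (c 2) (v l)) -
    2 * (S (c 0) (v k) + S (c 1) (v k) + S (c 2) (v k)) - 6 * S (v k) (v l)
     + 4 * ((N k 0 l + N k 1 l + N k 2 l) - (N l 0 k + N l 1 k + N l 2 k))
     + 2 * ((M l 1 0 + M l 2 0 + M l 0 1 + M l 2 1 + M l 0 2 + M l 1 2) -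
       (M k 1 0 + M k 2 0 + M k 0 1 + M k 2 1 + M k 0 2 + M k 1 2)) = 0 := by
    intro k l hkl
    have e1 := E k l 0 1 hkl (by decide)
    have e2 := E k l 0 2 hkl (by decide)
    have e3 := E k l 1 0 hkl (by decide)
    have e4 := E k l 1 2 hkl (by decide)
    have e5 := E k l 2 0 hkl (by decide)
    have e6 := E k l 2 1 hkl (by decide)
    linarith
  have f1 := F 0 1 (by decide)
  have f2 := F 0 2 (by decide)
  have f3 := F 1 2 (by decide)
  omega

/-- The same with edges that are continua: disjoint compact sets have disjoint thickenings, and a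
thickening of a connected set is open and connected, so it contains a path between the two vertices
of the edge. -/
lemma no_K33_continua (v c : Fin 3 → ℂ) (F : Fin 3 → Fin 3 → Set ℂ)
    (hK : ∀ k i, IsCompact (F k i)) (hF : ∀ k i, IsPreconnected (F k i))
    (hv : ∀ k i, v k ∈ F k i) (hc : ∀ k i, c i ∈ F k i)
    (hd : ∀ k l i j, k ≠ l → i ≠ j → Disjoint (F k i) (F l j)) : False := by
  obtain ⟨δ, hδ, hdis⟩ : ∃ δ : ℝ, 0 < δ ∧ ∀ k l i j, k ≠ l → i ≠ j →
      Disjoint (Metric.thickening δ (F k i)) (Metric.thickening δ (F l j)) := by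
    have : ∀ᶠ δ : ℝ in 𝓝[>] 0, ∀ k l i j, k ≠ l → i ≠ j →
        Disjoint (Metric.thickening δ (F k i)) (Metric.thickening δ (F l j)) := by
      simp only [eventually_all]
      intro k l i j hkl hij
      obtain ⟨δ, hδ, h⟩ := (hd k l i j hkl hij).exists_thickenings (hK k i) (hK l j).isClosed
      filter_upwards [Ioc_mem_nhdsGT hδ] with ε hε
      exact h.mono (Metric.thickening_mono hε.2 _) (Metric.thickening_mono hε.2 _)
    obtain ⟨δ, h1, h2⟩ := (this.and self_mem_nhdsWithin).exists
    exact ⟨δ, h2, h1⟩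
  have hpc : ∀ k i, IsPathConnected (Metric.thickening δ (F k i)) := by
    intro k i
    rw [← Metric.isOpen_thickening.isConnected_iff_isPathConnected]
    refine ⟨⟨v k, Metric.self_subset_thickening hδ _ (hv k i)⟩, ?_⟩
    have := ((hF k i).prod (convex_ball (0 : ℂ) δ).isPreconnected).image
      (fun p => p.1 + p.2) (by fun_prop)
    rwa [Set.image_prod, Set.image2_add, add_ball_zero] at this
  have hj : ∀ k i, JoinedIn (Metric.thickening δ (F k i)) (v k) (c i) := fun k i =>
    (hpc k i).joinedIn _ (Metric.self_subset_thickening hδ _ (hv k i))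
      _ (Metric.self_subset_thickening hδ _ (hc k i))
  choose γ hγ using hj
  refine no_K33_paths v c (fun k i => (γ k i).extend) (fun k i => (γ k i).continuous_extend)
    (fun k i => (γ k i).extend_zero) (fun k i => (γ k i).extend_one) ?_
  intro k l i j hkl hij s t hst
  have m : ∀ k i s, (γ k i).extend s ∈ Metric.thickening δ (F k i) := by
    intro k i s
    have : (γ k i).extend s ∈ range (γ k i) := by
      rw [← Path.extend_range]; exact mem_range_self s
    obtain ⟨x, hx⟩ := this
    rw [← hx]; exact hγ k i x
  exact Set.disjoint_left.1 (hdis k l i j hkl hij) (m k i s) (hst ▸ m l j t)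

/-! ### Boundary bumping and approaching a closed set inside a continuum -/

/-- Boundary bumping: if the continuum `X` has a point where `f ≥ r`, every component of
`X ∩ {f ≤ r}` reaches the level `f = r`.  Otherwise some clopen subset of `X ∩ {f ≤ r}` containing
the component lies in `{f < r}`, and it would separate `X`. -/
lemma boundary_bumping {X : Set ℂ} (hX : IsCompact X) (hXc : IsPreconnected X)
    {f : ℂ → ℝ} (hf : Continuous f) {r : ℝ} {x y : ℂ} (hx : x ∈ X) (hxr : f x ≤ r)
    (hy : y ∈ X) (hyr : r ≤ f y) :
    ∃ z ∈ connectedComponentIn (X ∩ {z | f z ≤ r}) x, f z = r := by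
  by_contra! hne
  have hP : IsCompact (X ∩ {z | f z ≤ r}) := hX.inter_right (isClosed_le hf continuous_const)
  set P := X ∩ {z | f z ≤ r} with hPdef
  have hxP : x ∈ P := ⟨hx, hxr⟩
  have : CompactSpace P := isCompact_iff_compactSpace.1 hP
  rw [connectedComponentIn_eq_image hxP] at hne
  have hlt : ∀ w ∈ connectedComponent (⟨x, hxP⟩ : P), f w < r := fun w hw =>
    lt_of_le_of_ne w.2.2 (hne _ ⟨w, hw, rfl⟩)
  obtain ⟨⟨Z, hZ, hxZ⟩, hZr⟩ : ∃ Z : {s : Set P // IsClopen s ∧ ⟨x, hxP⟩ ∈ s},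
      (Z : Set P) ⊆ {w : P | f w < r} := by
    have : Nonempty {s : Set P // IsClopen s ∧ (⟨x, hxP⟩ : P) ∈ s} :=
      ⟨⟨univ, isClopen_univ, mem_univ _⟩⟩
    refine exists_subset_nhds_of_isCompact' ?_ (fun i => i.2.1.isClosed.isCompact)
      (fun i => i.2.1.isClosed) ?_
    · intro A B
      exact ⟨⟨A.1 ∩ B.1, A.2.1.inter B.2.1, A.2.2, B.2.2⟩, inter_subset_left, inter_subset_right⟩
    · intro w hw
      rw [← connectedComponent_eq_iInter_isClopen] at hw
      exact (isOpen_lt (hf.comp continuous_subtype_val) continuous_const).mem_nhds (hlt w hw)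
  obtain ⟨O, hO, hOZ⟩ := isOpen_induced_iff.1 hZ.isOpen
  have hZcl : IsClosed (Subtype.val '' Z) :=
    (hZ.isClosed.isCompact.image continuous_subtype_val).isClosed
  have hyZ : y ∉ Subtype.val '' Z := by
    rintro ⟨w, hw, rfl⟩
    exact absurd (hZr hw) (not_lt.2 hyr)
  have hZO : ∀ w : P, w ∈ Z ↔ (w : ℂ) ∈ O := fun w => by rw [← hOZ]; rfl
  obtain ⟨w, hwX, ⟨hwO, hwr⟩, hwZ⟩ := hXc (O ∩ {z | f z < r}) (Subtype.val '' Z)ᶜ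
    (hO.inter (isOpen_lt hf continuous_const)) hZcl.isOpen_compl
    (by
      intro w _
      by_cases hw : w ∈ Subtype.val '' Z
      · obtain ⟨w, hw, rfl⟩ := hw
        exact Or.inl ⟨(hZO w).1 hw, hZr hw⟩
      · exact Or.inr hw)
    ⟨x, hx, (hZO ⟨x, hxP⟩).1 hxZ, hZr hxZ⟩ ⟨y, hy, hyZ⟩
  exact hwZ ⟨⟨w, hwX, le_of_lt (show f w < r from hwr)⟩, (hZO _).2 hwO, rfl⟩

lemma isCompact_connectedComponentIn {P : Set ℂ} (hP : IsCompact P) (x : ℂ) :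
    IsCompact (connectedComponentIn P x) := by
  by_cases hx : x ∈ P
  · have : CompactSpace P := isCompact_iff_compactSpace.1 hP
    rw [connectedComponentIn_eq_image hx]
    exact isClosed_connectedComponent.isCompact.image continuous_subtype_val
  · rw [connectedComponentIn_eq_empty hx]; exact isCompact_empty

/-- The closure `W` of the union of all subcontinua of `C` through `x` missing `E` meets `E`, by
boundary bumping.  Each point of `W` is approached by subcontinua of `C` through `x` missing `E`. -/
lemma exists_reach {C E : Set ℂ} (hC : IsCompact C) (hCc : IsPreconnected C) (hE : IsClosed E)
    {x : ℂ} (hxC : x ∈ C) (hxE : x ∉ E) (hCE : (C ∩ E).Nonempty) :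
    ∃ W, IsCompact W ∧ IsPreconnected W ∧ W ⊆ C ∧ x ∈ W ∧ (W ∩ E).Nonempty ∧
      ∀ w ∈ W, ∀ σ > 0, ∃ R, IsCompact R ∧ IsPreconnected R ∧ R ⊆ C ∧ x ∈ R ∧ Disjoint R E ∧
        (R ∩ Metric.closedBall w σ).Nonempty := by
  have hEne : E.Nonempty := hCE.mono inter_subset_right
  set 𝓡 : Set (Set ℂ) := {R | IsCompact R ∧ IsPreconnected R ∧ R ⊆ C ∧ x ∈ R ∧ Disjoint R E}
    with h𝓡
  have hx𝓡 : {x} ∈ 𝓡 := ⟨isCompact_singleton, isPreconnected_singleton,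
    singleton_subset_iff.2 hxC, rfl, disjoint_singleton_left.2 hxE⟩
  have hWC : closure (⋃₀ 𝓡) ⊆ C :=
    closure_minimal (sUnion_subset fun R hR => hR.2.2.1) hC.isClosed
  have hWcpt : IsCompact (closure (⋃₀ 𝓡)) := hC.of_isClosed_subset isClosed_closure hWC
  have hxW : x ∈ closure (⋃₀ 𝓡) := subset_closure ⟨{x}, hx𝓡, rfl⟩
  refine ⟨closure (⋃₀ 𝓡), hWcpt, ?_, hWC, hxW, ?_, ?_⟩
  · exact (isPreconnected_sUnion x 𝓡 (fun R hR => hR.2.2.2.1) (fun R hR => hR.2.1)).closure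
  · by_contra hne
    obtain ⟨w, hw, hmin⟩ := hWcpt.exists_isMinOn ⟨x, hxW⟩
      (Metric.continuous_infDist_pt E).continuousOn
    have hm : 0 < Metric.infDist w E :=
      (hE.notMem_iff_infDist_pos hEne).1 fun h => hne ⟨w, hw, h⟩
    set m := Metric.infDist w E
    obtain ⟨y, hyC, hyE⟩ := hCE
    have hxm : m ≤ Metric.infDist x E := hmin hxW
    have hcont : Continuous fun z => - Metric.infDist z E := (Metric.continuous_infDist_pt E).neg
    obtain ⟨z, hz, hzm⟩ := boundary_bumping hC hCc hcont (r := -(m / 2)) hxC (by linarith)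
      hyC (by rw [Metric.infDist_zero_of_mem hyE]; linarith)
    have hcomp : IsCompact (C ∩ {z | - Metric.infDist z E ≤ -(m / 2)}) :=
      hC.inter_right (isClosed_le hcont continuous_const)
    have hsub := connectedComponentIn_subset (C ∩ {z | - Metric.infDist z E ≤ -(m / 2)}) x
    have hzW : z ∈ closure (⋃₀ 𝓡) := by
      refine subset_closure ⟨_, ⟨isCompact_connectedComponentIn hcomp x,
        isPreconnected_connectedComponentIn, hsub.trans inter_subset_left,
        mem_connectedComponentIn ⟨hxC, ?_⟩, ?_⟩, hz⟩
      · show - Metric.infDist x E ≤ -(m / 2)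
        linarith
      · rw [Set.disjoint_left]
        intro a ha haE
        have : - Metric.infDist a E ≤ -(m / 2) := (hsub ha).2
        rw [Metric.infDist_zero_of_mem haE] at this
        linarith
    have : m ≤ Metric.infDist z E := hmin hzW
    linarith
  · intro w hw σ hσ
    obtain ⟨z, ⟨R, hR, hzR⟩, hzw⟩ := Metric.mem_closure_iff.1 hw σ hσ
    exact ⟨R, hR.1, hR.2.1, hR.2.2.1, hR.2.2.2.1, hR.2.2.2.2, z, hzR, by
      rw [Metric.mem_closedBall, dist_comm]; exact hzw.le⟩

/-- A continuum meeting two disjoint closed sets `E₁`, `E₂` has a point `c` outside both which can be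
approached arbitrarily closely from `E₁` without meeting `E₂`, and from `E₂` without meeting `E₁`.
It is found by applying `exists_reach` twice: inside `C` starting from `E₁`, then inside the
resulting continuum starting from `E₂`. -/
lemma exists_center {C E₁ E₂ : Set ℂ} (hC : IsCompact C) (hCc : IsPreconnected C)
    (hE₁ : IsClosed E₁) (hE₂ : IsClosed E₂) (hE : Disjoint E₁ E₂)
    (h₁ : (C ∩ E₁).Nonempty) (h₂ : (C ∩ E₂).Nonempty) :
    ∃ c ∈ C, c ∉ E₁ ∧ c ∉ E₂ ∧ ∀ σ > 0,
      (∃ R, IsCompact R ∧ IsPreconnected R ∧ R ⊆ C ∧ (R ∩ E₁).Nonempty ∧ Disjoint R E₂ ∧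
        (R ∩ Metric.closedBall c σ).Nonempty) ∧
      (∃ R, IsCompact R ∧ IsPreconnected R ∧ R ⊆ C ∧ (R ∩ E₂).Nonempty ∧ Disjoint R E₁ ∧
        (R ∩ Metric.closedBall c σ).Nonempty) := by
  obtain ⟨x, hxC, hx₁⟩ := h₁
  obtain ⟨W, hW, hWc, hWC, hxW, ⟨y, hyW, hy₂⟩, hWR⟩ :=
    exists_reach hC hCc hE₂ hxC (Set.disjoint_left.1 hE hx₁) h₂
  obtain ⟨V, -, hVc, hVW, hyV, hV₁, hVR⟩ :=
    exists_reach hW hWc hE₁ hyW (Set.disjoint_right.1 hE hy₂) ⟨x, hxW, hx₁⟩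
  obtain ⟨c, hcV, hc⟩ : ∃ c ∈ V, c ∉ E₁ ∪ E₂ := by
    by_contra! hcon
    obtain ⟨z, -, hz⟩ := isPreconnected_closed_iff.1 hVc E₁ E₂ hE₁ hE₂ hcon hV₁ ⟨y, hyV, hy₂⟩
    exact Set.disjoint_left.1 hE hz.1 hz.2
  rw [mem_union, not_or] at hc
  refine ⟨c, hWC (hVW hcV), hc.1, hc.2, fun σ hσ => ⟨?_, ?_⟩⟩
  · obtain ⟨R, a, b, d, e, f, g⟩ := hWR c (hVW hcV) σ hσ
    exact ⟨R, a, b, d, ⟨x, e, hx₁⟩, f, g⟩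
  · obtain ⟨R, a, b, d, e, f, g⟩ := hVR c hcV σ hσ
    exact ⟨R, a, b, d.trans hWC, ⟨y, e, hy₂⟩, f, g⟩

/-! ### Three disjoint continua joining two others -/

/-- Three disjoint continua `C i`, each meeting the disjoint continua `E₁` and `E₂`, cannot all be
accessible from a path connected set `U` disjoint from everything: the edges
`E₁ ∪ R₁ i ∪ disc`, `E₂ ∪ R₂ i ∪ disc` and `T ∪ segment` defined below draw `K₃,₃` in the plane,
with `T ⊆ U` a path. -/
lemma no_three_bridges {U E₁ E₂ : Set ℂ} {C : Fin 3 → Set ℂ} (hU : IsPathConnected U)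
    (hE₁ : IsCompact E₁) (hE₁c : IsPreconnected E₁) (hE₂ : IsCompact E₂)
    (hE₂c : IsPreconnected E₂) (hE : Disjoint E₁ E₂)
    (hC : ∀ i, IsCompact (C i)) (hCc : ∀ i, IsPreconnected (C i))
    (hCd : ∀ i j, i ≠ j → Disjoint (C i) (C j))
    (h₁ : ∀ i, (C i ∩ E₁).Nonempty) (h₂ : ∀ i, (C i ∩ E₂).Nonempty)
    (hUE₁ : Disjoint U E₁) (hUE₂ : Disjoint U E₂) (hUC : ∀ i, Disjoint U (C i))
    (hCU : ∀ i, C i ⊆ closure U) : False := by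
  choose c hcC hc₁ hc₂ hcR using fun i =>
    exists_center (hC i) (hCc i) hE₁.isClosed hE₂.isClosed hE (h₁ i) (h₂ i)
  have hcCj : ∀ i j, i ≠ j → c i ∉ C j := fun i j hij => Set.disjoint_left.1 (hCd i j hij) (hcC i)
  have hu : ∀ i, ∃ u ∈ U, Disjoint (segment ℝ u (c i)) E₁ ∧ Disjoint (segment ℝ u (c i)) E₂ ∧
      ∀ j, i ≠ j → Disjoint (segment ℝ u (c i)) (C j) := by
    intro i
    have hev : ∀ᶠ z in 𝓝 (c i), z ∉ E₁ ∧ z ∉ E₂ ∧ ∀ j, i ≠ j → z ∉ C j := by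
      refine (hE₁.isClosed.isOpen_compl.eventually_mem (hc₁ i)).and
        ((hE₂.isClosed.isOpen_compl.eventually_mem (hc₂ i)).and ?_)
      simp only [eventually_all]
      exact fun j hij => (hC j).isClosed.isOpen_compl.eventually_mem (hcCj i j hij)
    obtain ⟨ρ, hρ, hball⟩ := Metric.eventually_nhds_iff_ball.1 hev
    obtain ⟨u, huU, hud⟩ := Metric.mem_closure_iff.1 (hCU i (hcC i)) ρ hρ
    have hseg : segment ℝ u (c i) ⊆ Metric.ball (c i) ρ :=
      (convex_ball _ _).segment_subset (by rwa [Metric.mem_ball, dist_comm])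
        (Metric.mem_ball_self hρ)
    exact ⟨u, huU, Set.disjoint_left.2 fun z hz => (hball z (hseg hz)).1,
      Set.disjoint_left.2 fun z hz => (hball z (hseg hz)).2.1,
      fun j hij => Set.disjoint_left.2 fun z hz => (hball z (hseg hz)).2.2 j hij⟩
  choose u huU hs₁ hs₂ hsC using hu
  obtain ⟨γ, hγU, hγu⟩ := hU.exists_path_through_family u huU
  set T := range γ with hT
  have hTcpt : IsCompact T := isCompact_range γ.continuous
  have hTc : IsPreconnected T := isPreconnected_range γ.continuous
  have hscpt : ∀ i, IsCompact (segment ℝ (u i) (c i)) := fun i => by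
    rw [← convexHull_pair]; exact ((Set.toFinite {u i, c i}).isCompact_convexHull (𝕜 := ℝ))
  have hcT : ∀ i, c i ∉ T := fun i h => Set.disjoint_left.1 (hUC i) (hγU h) (hcC i)
  have hcs : ∀ i j, i ≠ j → c i ∉ segment ℝ (u j) (c j) := fun i j hij h =>
    Set.disjoint_left.1 (hsC j i hij.symm) h (hcC i)
  have hcc : ∀ i j, i ≠ j → c i ≠ c j := fun i j hij h => hcCj i j hij (h ▸ hcC j)
  have hball : ∀ (x : ℂ) (A : Set ℂ), IsClosed A → x ∉ A →
      ∀ᶠ σ : ℝ in 𝓝[>] 0, Disjoint (Metric.closedBall x σ) A := by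
    intro x A hA hx
    obtain ⟨ε, hε, h⟩ := Metric.nhds_basis_closedBall.mem_iff.1 (hA.isOpen_compl.mem_nhds hx)
    filter_upwards [Ioc_mem_nhdsGT hε] with σ hσ
    exact Set.disjoint_left.2 fun z hz => h (Metric.closedBall_subset_closedBall hσ.2 hz)
  -- The radius of the discs around the `c i` is chosen after the path `T` and the segments.
  obtain ⟨σ, hσ, hσ₁, hσ₂, hσT, hσj⟩ : ∃ σ : ℝ, 0 < σ ∧
      (∀ i, Disjoint (Metric.closedBall (c i) σ) E₁) ∧
      (∀ i, Disjoint (Metric.closedBall (c i) σ) E₂) ∧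
      (∀ i, Disjoint (Metric.closedBall (c i) σ) T) ∧
      (∀ i j, i ≠ j → Disjoint (Metric.closedBall (c i) σ) (C j) ∧
        Disjoint (Metric.closedBall (c i) σ) (segment ℝ (u j) (c j)) ∧
        Disjoint (Metric.closedBall (c i) σ) (Metric.closedBall (c j) σ)) := by
    refine Eventually.exists (f := 𝓝[>] (0 : ℝ)) ?_
    simp only [eventually_and, eventually_all]
    refine ⟨self_mem_nhdsWithin, fun i => hball _ _ hE₁.isClosed (hc₁ i),
      fun i => hball _ _ hE₂.isClosed (hc₂ i), fun i => hball _ _ hTcpt.isClosed (hcT i),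
      fun i j hij => ⟨hball _ _ (hC j).isClosed (hcCj i j hij),
        hball _ _ (hscpt j).isClosed (hcs i j hij), ?_⟩⟩
    have hpos : 0 < dist (c i) (c j) / 2 := half_pos (dist_pos.2 (hcc i j hij))
    filter_upwards [Ioo_mem_nhdsGT hpos] with σ hσ
    exact Metric.closedBall_disjoint_closedBall (by linarith [hσ.2])
  choose R₁ hR₁cpt hR₁c hR₁C hR₁E hR₁E₂ hR₁b using fun i => (hcR i σ hσ).1
  choose R₂ hR₂cpt hR₂c hR₂C hR₂E hR₂E₁ hR₂b using fun i => (hcR i σ hσ).2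
  have hBcpt : ∀ i, IsCompact (Metric.closedBall (c i) σ) := fun i => isCompact_closedBall _ _
  have hBc : ∀ i, IsPreconnected (Metric.closedBall (c i) σ) :=
    fun i => (convex_closedBall _ _).isPreconnected
  have hBm : ∀ i, c i ∈ Metric.closedBall (c i) σ := fun i => Metric.mem_closedBall_self hσ.le
  obtain ⟨e₁, he₁⟩ := (h₁ 0).mono inter_subset_right
  obtain ⟨e₂, he₂⟩ := (h₂ 0).mono inter_subset_right
  have d01 : ∀ i j, i ≠ j → Disjoint (E₁ ∪ R₁ i ∪ Metric.closedBall (c i) σ)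
      (E₂ ∪ R₂ j ∪ Metric.closedBall (c j) σ) := by
    intro i j hij
    simp only [disjoint_union_left, disjoint_union_right]
    exact ⟨⟨⟨⟨hE, hR₁E₂ i⟩, hσ₂ i⟩, ⟨(hR₂E₁ j).symm, (hCd i j hij).mono (hR₁C i) (hR₂C j)⟩,
      ((hσj i j hij).1).mono_right (hR₂C j)⟩, ⟨(hσ₁ j).symm,
      ((hσj j i hij.symm).1.mono_right (hR₁C i)).symm⟩, (hσj i j hij).2.2⟩
  have d02 : ∀ i j, i ≠ j → Disjoint (E₁ ∪ R₁ i ∪ Metric.closedBall (c i) σ)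
      (T ∪ segment ℝ (u j) (c j)) := by
    intro i j hij
    simp only [disjoint_union_left, disjoint_union_right]
    exact ⟨⟨⟨(hUE₁.mono_left hγU).symm, ((hUC i).mono hγU (hR₁C i)).symm⟩, hσT i⟩,
      ⟨(hs₁ j).symm, ((hsC j i hij.symm).mono_right (hR₁C i)).symm⟩, (hσj i j hij).2.1⟩
  have d12 : ∀ i j, i ≠ j → Disjoint (E₂ ∪ R₂ i ∪ Metric.closedBall (c i) σ)
      (T ∪ segment ℝ (u j) (c j)) := by
    intro i j hij
    simp only [disjoint_union_left, disjoint_union_right]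
    exact ⟨⟨⟨(hUE₂.mono_left hγU).symm, ((hUC i).mono hγU (hR₂C i)).symm⟩, hσT i⟩,
      ⟨(hs₂ j).symm, ((hsC j i hij.symm).mono_right (hR₂C i)).symm⟩, (hσj i j hij).2.1⟩
  refine no_K33_continua ![e₁, e₂, u 0] c
    ![fun i => E₁ ∪ R₁ i ∪ Metric.closedBall (c i) σ,
      fun i => E₂ ∪ R₂ i ∪ Metric.closedBall (c i) σ,
      fun i => T ∪ segment ℝ (u i) (c i)] ?_ ?_ ?_ ?_ ?_
  · intro k i
    fin_cases k
    · exact (hE₁.union (hR₁cpt i)).union (hBcpt i)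
    · exact (hE₂.union (hR₂cpt i)).union (hBcpt i)
    · exact hTcpt.union (hscpt i)
  · intro k i
    fin_cases k
    · obtain ⟨z, hz⟩ := hR₁E i
      obtain ⟨w, hw⟩ := hR₁b i
      exact (hE₁c.union z hz.2 hz.1 (hR₁c i)).union w (Or.inr hw.1) hw.2 (hBc i)
    · obtain ⟨z, hz⟩ := hR₂E i
      obtain ⟨w, hw⟩ := hR₂b i
      exact (hE₂c.union z hz.2 hz.1 (hR₂c i)).union w (Or.inr hw.1) hw.2 (hBc i)
    · exact hTc.union (u i) (hγu i) (left_mem_segment ℝ _ _) (convex_segment _ _).isPreconnected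
  · intro k i
    fin_cases k
    · exact Or.inl (Or.inl he₁)
    · exact Or.inl (Or.inl he₂)
    · exact Or.inl (hγu 0)
  · intro k i
    fin_cases k
    · exact Or.inr (hBm i)
    · exact Or.inr (hBm i)
    · exact Or.inr (right_mem_segment ℝ _ _)
  · intro k l i j hkl hij
    fin_cases k <;> fin_cases l
    · exact (hkl rfl).elim
    · exact d01 i j hij
    · exact d02 i j hij
    · exact (d01 j i hij.symm).symm
    · exact (hkl rfl).elim
    · exact d12 i j hij
    · exact (d02 j i hij.symm).symm
    · exact (d12 j i hij.symm).symm
    · exact (hkl rfl).elim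

/-! ### The unbounded complementary component -/

lemma isPreconnected_norm_gt (r : ℝ) (hr : 0 ≤ r) : IsPreconnected {z : ℂ | r < ‖z‖} := by
  have h := ((isPreconnected_Ioi (a := r)).prod (isPreconnected_univ (α := ℝ))).image
    (fun p : ℝ × ℝ => (p.1 : ℂ) * exp (p.2 * I)) (by fun_prop)
  convert h using 1
  ext z
  constructor
  · intro hz
    exact ⟨(‖z‖, arg z), ⟨hz, mem_univ _⟩, norm_mul_exp_arg_mul_I z⟩
  · rintro ⟨⟨s, t⟩, ⟨hs, -⟩, rfl⟩
    have hrs : r < s := hs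
    simpa [norm_exp_ofReal_mul_I, abs_of_nonneg (hr.trans hrs.le)] using hrs

/-- All unbounded components of the complement contain the outside of a large disc, so `UInf X` is
a single component of an open set. -/
lemma isPathConnected_UInf {X : Set ℂ} (hX : IsCompact X) : IsPathConnected (UInf X) := by
  obtain ⟨r, hr, hXr⟩ := hX.isBounded.exists_pos_norm_le
  have hsub : {z : ℂ | r < ‖z‖} ⊆ Xᶜ := fun z hz hzX => absurd (hXr z hzX) (not_le.2 hz)
  have hz₀ : ((r + 1 : ℝ) : ℂ) ∈ {z : ℂ | r < ‖z‖} := by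
    simp only [mem_ofPred_eq, norm_real, Real.norm_eq_abs]
    rw [abs_of_pos (by linarith)]; linarith
  set z₀ : ℂ := ((r + 1 : ℝ) : ℂ)
  have hout : {z : ℂ | r < ‖z‖} ⊆ connectedComponentIn Xᶜ z₀ :=
    (isPreconnected_norm_gt r hr.le).subset_connectedComponentIn hz₀ hsub
  have heq : UInf X = connectedComponentIn Xᶜ z₀ := by
    ext z
    constructor
    · rintro ⟨hzX, hub⟩
      obtain ⟨w, hw, hwr⟩ : ∃ w ∈ connectedComponentIn Xᶜ z, r < ‖w‖ := by
        by_contra! hcon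
        exact hub (isBounded_iff_forall_norm_le.2 ⟨r, hcon⟩)
      rw [connectedComponentIn_eq (hout hwr), ← connectedComponentIn_eq hw]
      exact mem_connectedComponentIn hzX
    · intro hz
      refine ⟨connectedComponentIn_subset _ _ hz, fun hb => ?_⟩
      rw [← connectedComponentIn_eq hz] at hb
      obtain ⟨B, hB⟩ := isBounded_iff_forall_norm_le.1 (hb.subset hout)
      have h1 : ((max r B + 1 : ℝ) : ℂ) ∈ {z : ℂ | r < ‖z‖} := by
        simp only [mem_ofPred_eq, norm_real, Real.norm_eq_abs]
        rw [abs_of_pos (by linarith [le_max_left r B])]; linarith [le_max_left r B]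
      have h2 := hB _ h1
      simp only [norm_real, Real.norm_eq_abs] at h2
      rw [abs_of_pos (by linarith [le_max_left r B])] at h2
      linarith [le_max_right r B]
  rw [heq, ← (hX.isClosed.isOpen_compl.connectedComponentIn).isConnected_iff_isPathConnected]
  exact isConnected_connectedComponentIn_iff.2 (hsub hz₀)

/-! ### The two implications -/

lemma locallyConnected_of_finSuslinian {X : Set ℂ} (hX : IsCompact X) (hXc : IsPreconnected X)
    (hS : FinSuslinianSet X) : LocallyConnectedSpace X := by
  rw [locallyConnectedSpace_iff_connected_subsets]
  rintro ⟨x, hxX⟩ O hO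
  obtain ⟨r, hr, hrO⟩ := Metric.nhds_basis_closedBall.mem_iff.1 hO
  by_cases hfar : ∃ y ∈ X, r ≤ dist y x
  swap
  · push Not at hfar
    refine ⟨univ, univ_mem, ?_, fun y _ => hrO (hfar y y.2).le⟩
    have := isPreconnected_iff_preconnectedSpace.1 hXc
    exact isPreconnected_univ
  obtain ⟨y, hyX, hyr⟩ := hfar
  have hcont : Continuous fun z => dist z x := by fun_prop
  set K : Set ℂ := X ∩ {z | dist z x ≤ r} with hK
  have hKcpt : IsCompact K := hX.inter_right (isClosed_le hcont continuous_const)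
  set 𝒞 : Set (Set ℂ) := connectedComponentIn K '' (X ∩ {z | dist z x < r / 2}) with h𝒞
  have hmemK : ∀ z ∈ X ∩ {z | dist z x < r / 2}, z ∈ K := fun z hz =>
    ⟨hz.1, by have : dist z x < r / 2 := hz.2
              show dist z x ≤ r
              linarith⟩
  have hfin : 𝒞.Finite := by
    refine hS (r / 2) (half_pos hr) 𝒞 ?_ ?_
    · rintro _ ⟨z, hz, rfl⟩
      have hzr : dist z x < r / 2 := hz.2
      have hcpt := isCompact_connectedComponentIn hKcpt z
      refine ⟨(connectedComponentIn_subset _ _).trans inter_subset_left, hcpt,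
        isConnected_connectedComponentIn_iff.2 (hmemK z hz), ?_⟩
      obtain ⟨w, hw, hwr⟩ := boundary_bumping hX hXc hcont hz.1
        (show dist z x ≤ r by linarith) hyX hyr
      have h1 := Metric.dist_le_diam_of_mem hcpt.isBounded hw
        (mem_connectedComponentIn (hmemK z hz))
      have h2 := dist_triangle w z x
      linarith
    · rintro _ ⟨z, hz, rfl⟩ _ ⟨w, hw, rfl⟩ hne
      rw [Set.disjoint_left]
      intro a ha hb
      exact hne ((connectedComponentIn_eq ha).trans (connectedComponentIn_eq hb).symm)
  have hxK : x ∈ K := hmemK x ⟨hxX, by simpa using half_pos hr⟩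
  have hrest : IsClosed (⋃₀ (𝒞 \ {connectedComponentIn K x})) := by
    rw [sUnion_eq_biUnion]
    refine (hfin.subset sdiff_subset).isClosed_biUnion ?_
    rintro _ ⟨⟨z, hz, rfl⟩, -⟩
    exact (isCompact_connectedComponentIn hKcpt z).isClosed
  have hxrest : x ∉ ⋃₀ (𝒞 \ {connectedComponentIn K x}) := by
    rintro ⟨_, ⟨⟨z, hz, rfl⟩, hne⟩, hx⟩
    exact hne (connectedComponentIn_eq hx)
  refine ⟨Subtype.val ⁻¹' connectedComponentIn K x, ?_, ?_, ?_⟩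
  · have h1 : ∀ᶠ z in 𝓝 x, z ∉ ⋃₀ (𝒞 \ {connectedComponentIn K x}) ∧ dist z x < r / 2 :=
      (hrest.isOpen_compl.eventually_mem hxrest).and (Metric.ball_mem_nhds x (half_pos hr))
    have h2 := (continuous_subtype_val (p := (· ∈ X))).continuousAt (x := ⟨x, hxX⟩) |>.eventually h1
    filter_upwards [h2] with z hz
    have hz' : (z : ℂ) ∈ X ∩ {z | dist z x < r / 2} := ⟨z.2, hz.2⟩
    have hzz := mem_connectedComponentIn (hmemK z hz')
    by_contra hcon
    refine hz.1 ⟨connectedComponentIn K z, ⟨⟨z, hz', rfl⟩, fun h => hcon ?_⟩, hzz⟩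
    rw [mem_singleton_iff] at h
    rw [mem_preimage, ← h]; exact hzz
  · rw [← IsInducing.subtypeVal.isPreconnected_image, Subtype.image_preimage_coe,
      inter_eq_self_of_subset_right ((connectedComponentIn_subset _ _).trans inter_subset_left)]
    exact isPreconnected_connectedComponentIn
  · intro z hz
    exact hrO (connectedComponentIn_subset K x hz).2

/-- In a locally connected compact set, every point has arbitrarily small neighbourhoods (relative
to `X`) which are continua. -/
lemma exists_connected_nhd {X : Set ℂ} (hX : IsCompact X) [LocallyConnectedSpace X] {a : ℂ}
    (ha : a ∈ X) {r : ℝ} (hr : 0 < r) :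
    ∃ E, IsCompact E ∧ IsPreconnected E ∧ E ⊆ X ∧ E ⊆ Metric.closedBall a r ∧
      ∃ V ∈ 𝓝 a, X ∩ V ⊆ E := by
  obtain ⟨N, hN, hNc, hNr⟩ := locallyConnectedSpace_iff_connected_subsets.1
    (inferInstance : LocallyConnectedSpace X) ⟨a, ha⟩ _ (Metric.closedBall_mem_nhds _ hr)
  have hsub : Subtype.val '' N ⊆ X := by rintro _ ⟨z, -, rfl⟩; exact z.2
  have hsub' : closure (Subtype.val '' N) ⊆ X := closure_minimal hsub hX.isClosed
  refine ⟨closure (Subtype.val '' N), hX.of_isClosed_subset isClosed_closure hsub',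
    (hNc.image _ continuous_subtype_val.continuousOn).closure, hsub', ?_, ?_⟩
  · refine closure_minimal ?_ Metric.isClosed_closedBall
    rintro _ ⟨z, hz, rfl⟩
    exact hNr hz
  · rw [nhds_induced, mem_comap] at hN
    obtain ⟨V, hV, hVN⟩ := hN
    exact ⟨V, hV, fun z hz => subset_closure ⟨⟨z, hz.1⟩, hVN hz.2, rfl⟩⟩

lemma finSuslinian_of_locallyConnected {X : Set ℂ} (hX : IsCompact X) (hXu : Unshielded X)
    [LocallyConnectedSpace X] : FinSuslinianSet X := by
  intro ε hε 𝒞 h𝒞 hdis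
  by_contra hinf
  have hinf' : 𝒞.Infinite := hinf
  set C : ℕ → Set ℂ := fun n => (hinf'.natEmbedding 𝒞 n : Set ℂ) with hCdef
  have hC𝒞 : ∀ n, C n ∈ 𝒞 := fun n => (hinf'.natEmbedding 𝒞 n).2
  have hCinj : Function.Injective C :=
    Subtype.val_injective.comp (hinf'.natEmbedding 𝒞).injective
  have hab : ∀ n, ∃ p : ℂ × ℂ, p.1 ∈ C n ∧ p.2 ∈ C n ∧ ε / 2 ≤ dist p.1 p.2 := by
    intro n
    by_contra! hcon
    have := Metric.diam_le_of_forall_dist_le (half_pos hε).le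
      (fun x hx y hy => (hcon (x, y) hx hy).le)
    linarith [(h𝒞 _ (hC𝒞 n)).2.2.2]
  choose p hpa hpb hpd using hab
  obtain ⟨⟨a, b⟩, ⟨haX, hbX⟩, φ, hφ, hlim⟩ := (hX.prod hX).tendsto_subseq
    (x := p) fun n => ⟨(h𝒞 _ (hC𝒞 n)).1 (hpa n), (h𝒞 _ (hC𝒞 n)).1 (hpb n)⟩
  have hla : Tendsto (fun n => (p (φ n)).1) atTop (𝓝 a) :=
    (continuous_fst.tendsto (a, b)).comp hlim
  have hlb : Tendsto (fun n => (p (φ n)).2) atTop (𝓝 b) :=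
    (continuous_snd.tendsto (a, b)).comp hlim
  have hdab : ε / 2 ≤ dist a b := ge_of_tendsto' (hla.dist hlb) fun n => hpd (φ n)
  obtain ⟨E₁, hE₁, hE₁c, hE₁X, hE₁a, V₁, hV₁, hVE₁⟩ :=
    exists_connected_nhd hX haX (r := ε / 8) (by linarith)
  obtain ⟨E₂, hE₂, hE₂c, hE₂X, hE₂b, V₂, hV₂, hVE₂⟩ :=
    exists_connected_nhd hX hbX (r := ε / 8) (by linarith)
  obtain ⟨n, hn⟩ := ((hla.eventually hV₁).and (hlb.eventually hV₂)).exists_forall_of_atTop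
  have hUX : Disjoint (UInf X) X := Set.disjoint_left.2 fun z hz => hz.1
  have hXU : X ⊆ closure (UInf X) := hXu.subset.trans frontier_subset_closure
  have hD : ∀ i : Fin 3, C (φ (n + i)) ∈ 𝒞 := fun i => hC𝒞 _
  refine no_three_bridges (C := fun i : Fin 3 => C (φ (n + i))) (isPathConnected_UInf hX)
    hE₁ hE₁c hE₂ hE₂c ?_ (fun i => (h𝒞 _ (hD i)).2.1) (fun i => (h𝒞 _ (hD i)).2.2.1.isPreconnected)
    ?_ ?_ ?_ (hUX.mono_right hE₁X) (hUX.mono_right hE₂X)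
    (fun i => hUX.mono_right (h𝒞 _ (hD i)).1) (fun i => (h𝒞 _ (hD i)).1.trans hXU)
  · exact (Metric.closedBall_disjoint_closedBall (by linarith)).mono hE₁a hE₂b
  · intro i j hij
    refine hdis (hD i) (hD j) fun h => hij ?_
    have := hφ.injective (hCinj h)
    exact Fin.ext (by omega)
  · intro i
    exact ⟨_, hpa _, hVE₁ ⟨(h𝒞 _ (hD i)).1 (hpa _), (hn (n + i) (by omega)).1⟩⟩
  · intro i
    exact ⟨_, hpb _, hVE₂ ⟨(h𝒞 _ (hD i)).1 (hpb _), (hn (n + i) (by omega)).2⟩⟩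

/-- An unshielded plane continuum is locally connected if and only if it is finitely
Suslinian. -/
theorem unshielded_lc_iff_finSuslinian (X : Set ℂ)
    (hXcpt : IsCompact X) (hXconn : IsConnected X) (hXun : Unshielded X) :
    LocallyConnectedSpace ↥X ↔ FinSuslinianSet X :=
  ⟨fun _ => finSuslinian_of_locallyConnected hXcpt hXun,
    fun h => locallyConnected_of_finSuslinian hXcpt hXconn.isPreconnected h⟩
end

section
/- Let X and Y be compacta and let m : X → Y be a monotone map. Then distinct connected components of X map into distinct connected components of Y: if A and B are connected components of X with A ≠ B, then the connected component of Y containing m(A) is different from the connected component of Y containing m(B). -/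
/-- A monotone map: a continuous surjection all of whose fibers are connected. -/
def IsMonotoneMap {A B : Type} [TopologicalSpace A] [TopologicalSpace B] (f : A → B) : Prop :=
  Continuous f ∧ Function.Surjective f ∧ ∀ b : B, IsConnected (f ⁻¹' {b})

/-- A monotone map between compacta sends distinct connected components of the source into
distinct connected components of the target. -/
theorem monotone_separates_components (X Y : Type) [MetricSpace X] [MetricSpace Y]
    [CompactSpace X] [CompactSpace Y] [Nonempty X] [Nonempty Y]
    (m : X → Y) (hm : IsMonotoneMap m) (x y : X)
    (h : connectedComponent x ≠ connectedComponent y) :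
    connectedComponent (m x) ≠ connectedComponent (m y) := by
  -- A continuous surjection from a compact space to a Hausdorff space is a quotient map, and for
  -- a quotient map with connected fibers the preimage of the component of `m z` is exactly the
  -- component of `z`; so components of `X` are recovered from components of `Y`.
  obtain ⟨hc, hs, hf⟩ := hm
  have hq := hc.isClosedMap.isQuotientMap hc hs
  intro he
  apply h
  rw [← hq.isCoinducing.preimage_connectedComponent hf x,
    ← hq.isCoinducing.preimage_connectedComponent hf y, he]
end
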